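/- Let d ≥ 1, let I ⊆ ℝ be an interval containing t₀, and let B, C, F : I → M_d(ℝ) be continuous matrix-valued maps with C(t) and F(t) symmetric for every t ∈ I. Suppose H : I → M_d(ℂ) is continuously differentiable, H(t) is complex symmetric with Im H(t) positive definite for every t ∈ I, and H satisfies the matrix Riccati equation H′(t) + B(t) H(t) + H(t) B(t)ᵀ + H(t) C(t) H(t) = F(t) on I. Fix c₀ ∈ ℂ and define a₀(t) = c₀ · exp( −(1/2) ∫_{t₀}^{t} tr( B(s) + C(s) H(s) ) ds ). Then the function t ↦ |a₀(t)|² / √(det Im H(t)) is constant on I. -/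

import Mathlib

open MeasureTheory Matrix

/-!
Taking imaginary parts turns the Riccati equation into the linear equation `Y' + A Y + Y D = 0` for
`Y = Im H`, where `A = B + (Re H) C` and `D = Bᵀ + C (Re H)`; both have trace
`Re tr (B + C H) = Re η₀`. By Jacobi's formula `(det Y)' = -2 (Re η₀) det Y`, hence
`√(det Y)` is proportional to `exp (-∫ Re η₀)`, which is also the factor by which `|a₀|²` varies.
-/

section Jacobi

variable {n : Type*} [Fintype n] [DecidableEq n]

lemma sum_det_updateRow {R : Type*} [CommRing R] (M N : Matrix n n R) :
    ∑ i, (M.updateRow i (N i)).det = (N * adjugate M).trace := by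
  refine Finset.sum_congr rfl fun i _ => ?_
  rw [← cramer_transpose_apply, cramer_eq_adjugate_mulVec, ← adjugate_transpose, mulVec_transpose]
  rfl

lemma hasDerivWithinAt_det {𝕜 : Type*} [NontriviallyNormedField 𝕜] {Y : 𝕜 → Matrix n n 𝕜}
    {Y' : Matrix n n 𝕜} {s : Set 𝕜} {t : 𝕜}
    (hY : ∀ i j, HasDerivWithinAt (fun u => Y u i j) (Y' i j) s t) :
    HasDerivWithinAt (fun u => (Y u).det) (Y' * adjugate (Y t)).trace s t := by
  let detRows : ContinuousMultilinearMap 𝕜 (fun _ : n => n → 𝕜) 𝕜 :=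
    ⟨(detRowAlternating (R := 𝕜)).toMultilinearMap, continuous_id.matrix_det⟩
  have hrows : HasDerivWithinAt (fun u i => Y u i) (fun i => Y' i) s t :=
    hasDerivWithinAt_pi.2 fun i => hasDerivWithinAt_pi.2 fun j => hY i j
  rw [← sum_det_updateRow]
  refine ((detRows.hasFDerivAt (Y t)).comp_hasDerivWithinAt t hrows).congr_deriv ?_
  exact detRows.linearDeriv_apply (Y t) Y'

lemma trace_mul_add_mul_mul_adjugate {R : Type*} [CommRing R] (A D Y : Matrix n n R) :
    ((A * Y + Y * D) * adjugate Y).trace = (A.trace + D.trace) * Y.det := by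
  have hA : (A * Y * adjugate Y).trace = A.trace * Y.det := by
    rw [Matrix.mul_assoc, mul_adjugate, Matrix.mul_smul, Matrix.mul_one, trace_smul,
      smul_eq_mul, mul_comm]
  have hD : (Y * D * adjugate Y).trace = D.trace * Y.det := by
    rw [trace_mul_cycle, adjugate_mul, Matrix.smul_mul, Matrix.one_mul, trace_smul,
      smul_eq_mul, mul_comm]
  rw [add_mul, trace_add, hA, hD, add_mul]

end Jacobi

lemma continuousOn_of_hasDerivWithinAt_apply {m n 𝕜 E : Type*} [NontriviallyNormedField 𝕜]
    [NormedAddCommGroup E] [NormedSpace 𝕜 E] {M M' : 𝕜 → Matrix m n E} {s : Set 𝕜}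
    (hM : ∀ t ∈ s, ∀ i j, HasDerivWithinAt (fun u => M u i j) (M' t i j) s t) :
    ContinuousOn M s :=
  continuousOn_pi.2 fun i => continuousOn_pi.2 fun j t ht => (hM t ht i j).continuousWithinAt

section Riccati

variable {n : Type*} [Fintype n]

lemma map_im_mul {l m : Type*} (M : Matrix l n ℂ) (N : Matrix n m ℂ) :
    (M * N).map Complex.im =
      M.map Complex.re * N.map Complex.im + M.map Complex.im * N.map Complex.re := by
  ext i j
  simp [mul_apply, Finset.sum_add_distrib]

lemma map_re_mul {l m : Type*} (M : Matrix l n ℂ) (N : Matrix n m ℂ) :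
    (M * N).map Complex.re =
      M.map Complex.re * N.map Complex.re - M.map Complex.im * N.map Complex.im := by
  ext i j
  simp [mul_apply, Finset.sum_sub_distrib]

lemma map_re_map_ofReal {l m : Type*} (M : Matrix l m ℝ) :
    (M.map Complex.ofReal).map Complex.re = M := by
  ext i j
  rfl

lemma map_im_map_ofReal {l m : Type*} (M : Matrix l m ℝ) :
    (M.map Complex.ofReal).map Complex.im = 0 := by
  ext i j
  rfl

lemma map_im_riccati {B C F : Matrix n n ℝ} {H H' : Matrix n n ℂ}
    (hric : H' + B.map Complex.ofReal * H + H * Bᵀ.map Complex.ofReal +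
      H * C.map Complex.ofReal * H = F.map Complex.ofReal) :
    H'.map Complex.im = -((B + H.map Complex.re * C) * H.map Complex.im +
      H.map Complex.im * (Bᵀ + C * H.map Complex.re)) := by
  have him := congrArg (fun M : Matrix n n ℂ => M.map Complex.im) hric
  simp only [Matrix.map_add _ Complex.add_im, map_im_mul, map_re_mul, map_re_map_ofReal,
    map_im_map_ofReal, Matrix.zero_mul, Matrix.mul_zero, add_zero, zero_add, sub_zero] at him
  rw [eq_neg_iff_add_eq_zero, ← him]
  noncomm_ring

/-- The coefficient `η₀ = tr (B + C H)` of the transport equation `∂ₜ a₀ + (1/2) η₀ a₀ = 0` for the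
leading amplitude of a Gaussian beam. -/
noncomputable def transportCoeff (B C : Matrix n n ℝ) (H : Matrix n n ℂ) : ℂ :=
  (B.map Complex.ofReal + C.map Complex.ofReal * H).trace

lemma re_transportCoeff (B C : Matrix n n ℝ) (H : Matrix n n ℂ) :
    (transportCoeff B C H).re = B.trace + (C * H.map Complex.re).trace := by
  simp [transportCoeff, trace, mul_apply, Finset.sum_add_distrib]

lemma continuousOn_transportCoeff {X : Type*} [TopologicalSpace X] {s : Set X}
    {B C : X → Matrix n n ℝ} {H : X → Matrix n n ℂ}
    (hB : ContinuousOn B s) (hC : ContinuousOn C s) (hH : ContinuousOn H s) :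
    ContinuousOn (fun x => transportCoeff (B x) (C x) (H x)) s := by
  have hofReal : Continuous fun M : Matrix n n ℝ => M.map Complex.ofReal :=
    continuous_id.matrix_map Complex.continuous_ofReal
  exact continuous_id.matrix_trace.comp_continuousOn
    ((hofReal.comp_continuousOn hB).add ((hofReal.comp_continuousOn hC).mul hH))

lemma hasDerivWithinAt_det_im_of_riccati [DecidableEq n] {B C F : Matrix n n ℝ}
    {H : ℝ → Matrix n n ℂ} {H' : Matrix n n ℂ} {s : Set ℝ} {t : ℝ}
    (hH : ∀ i j, HasDerivWithinAt (fun u => H u i j) (H' i j) s t)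
    (hric : H' + B.map Complex.ofReal * H t + H t * Bᵀ.map Complex.ofReal +
      H t * C.map Complex.ofReal * H t = F.map Complex.ofReal) :
    HasDerivWithinAt (fun u => ((H u).map Complex.im).det)
      (-2 * (transportCoeff B C (H t)).re * ((H t).map Complex.im).det) s t := by
  have him : ∀ i j, HasDerivWithinAt (fun u => (H u).map Complex.im i j)
      (H'.map Complex.im i j) s t := fun i j =>
    Complex.imCLM.hasFDerivAt.comp_hasDerivWithinAt t (hH i j)
  refine (hasDerivWithinAt_det him).congr_deriv ?_
  rw [map_im_riccati hric, Matrix.neg_mul, trace_neg, trace_mul_add_mul_mul_adjugate,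
    re_transportCoeff, trace_add, trace_add, trace_transpose, trace_mul_comm _ C]
  ring

end Riccati

section Amplitude

open Set

variable {a b : ℝ}

lemma eq_mul_exp_integral_of_hasDerivWithinAt {g φ : ℝ → ℝ}
    (hg : ∀ u ∈ uIcc a b, HasDerivWithinAt g (φ u * g u) (uIcc a b) u)
    (hpos : ∀ u ∈ uIcc a b, 0 < g u) (hφ : IntervalIntegrable φ volume a b) :
    g b = g a * Real.exp (∫ u in a..b, φ u) := by
  have hlog : ∀ u ∈ uIcc a b,
      HasDerivWithinAt (fun v => Real.log (g v)) (φ u) (uIcc a b) u := fun u hu =>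
    ((hg u hu).log (hpos u hu).ne').congr_deriv (mul_div_cancel_right₀ _ (hpos u hu).ne')
  have hint : ∫ u in a..b, φ u = Real.log (g b) - Real.log (g a) :=
    intervalIntegral.integral_eq_sub_of_hasDeriv_right
      (fun u hu => (hlog u hu).continuousWithinAt)
      (fun u hu => ((hlog u (Ioo_subset_Icc_self hu)).hasDerivAt
        (Icc_mem_nhds hu.1 hu.2)).hasDerivWithinAt) hφ
  rw [hint, Real.exp_sub, Real.exp_log (hpos b right_mem_uIcc), Real.exp_log (hpos a left_mem_uIcc),
    mul_div_cancel₀ _ (hpos a left_mem_uIcc).ne']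

lemma norm_sq_mul_exp_neg_half_mul (c z : ℂ) :
    ‖c * Complex.exp (-(1 / 2 : ℂ) * z)‖ ^ 2 = ‖c‖ ^ 2 * Real.exp (-z.re) := by
  have hre : (-(1 / 2 : ℂ) * z).re = -z.re / 2 := by
    rw [show -(1 / 2 : ℂ) = ((-(1 / 2) : ℝ) : ℂ) by push_cast; rfl, Complex.re_ofReal_mul]
    ring
  rw [norm_mul, mul_pow, Complex.norm_exp, hre, Real.exp_half, Real.sq_sqrt (Real.exp_pos _).le]

lemma norm_sq_div_sqrt_eq_of_hasDerivWithinAt {η : ℝ → ℂ} {g : ℝ → ℝ} (c : ℂ)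
    (hg : ∀ u ∈ uIcc a b, HasDerivWithinAt g (-2 * (η u).re * g u) (uIcc a b) u)
    (hpos : ∀ u ∈ uIcc a b, 0 < g u) (hη : IntervalIntegrable η volume a b) :
    ‖c * Complex.exp (-(1 / 2 : ℂ) * ∫ u in a..b, η u)‖ ^ 2 / √(g b) = ‖c‖ ^ 2 / √(g a) := by
  have hηre : IntervalIntegrable (fun u => (η u).re) volume a b := ⟨hη.1.re, hη.2.re⟩
  have hre : ∫ u in a..b, (η u).re = (∫ u in a..b, η u).re :=
    intervalIntegral.intervalIntegral_re hη
  have hgb : g b = g a * Real.exp (-2 * (∫ u in a..b, η u).re) := by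
    rw [eq_mul_exp_integral_of_hasDerivWithinAt hg hpos (hηre.const_mul (-2)),
      intervalIntegral.integral_const_mul, hre]
  have hsqrt : √(g b) = √(g a) * Real.exp (-(∫ u in a..b, η u).re) := by
    rw [hgb, Real.sqrt_mul (hpos a left_mem_uIcc).le, ← Real.exp_half]
    ring_nf
  rw [norm_sq_mul_exp_neg_half_mul, hsqrt, mul_div_mul_right _ _ (Real.exp_pos _).ne']

end Amplitude

theorem stmt11_general {n : Type*} [Fintype n] [DecidableEq n] {I : Set ℝ} (hI : I.OrdConnected)
    {t₀ : ℝ} (ht₀ : t₀ ∈ I) {B C F : ℝ → Matrix n n ℝ} {H H' : ℝ → Matrix n n ℂ}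
    (hη : ∀ t ∈ I, IntervalIntegrable (fun s => transportCoeff (B s) (C s) (H s)) volume t₀ t)
    (hH : ∀ t ∈ I, ∀ i j, HasDerivWithinAt (fun s => H s i j) (H' t i j) I t)
    (hpos : ∀ t ∈ I, 0 < ((H t).map Complex.im).det)
    (hric : ∀ t ∈ I,
      H' t + (B t).map Complex.ofReal * H t + H t * ((B t)ᵀ).map Complex.ofReal +
        H t * (C t).map Complex.ofReal * H t = (F t).map Complex.ofReal)
    {c₀ : ℂ} {a₀ : ℝ → ℂ}
    (ha₀ : ∀ t : ℝ, a₀ t = c₀ * Complex.exp (-(1 / 2 : ℂ) *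
      ∫ s in t₀..t, transportCoeff (B s) (C s) (H s))) :
    ∀ t ∈ I, ∀ t' ∈ I,
      ‖a₀ t‖ ^ 2 / √(((H t).map Complex.im).det) =
        ‖a₀ t'‖ ^ 2 / √(((H t').map Complex.im).det) := by
  have heq : ∀ t ∈ I, ‖a₀ t‖ ^ 2 / √(((H t).map Complex.im).det) =
      ‖c₀‖ ^ 2 / √(((H t₀).map Complex.im).det) := by
    intro t ht
    have hsub : Set.uIcc t₀ t ⊆ I := hI.uIcc_subset ht₀ ht
    rw [ha₀ t]
    exact norm_sq_div_sqrt_eq_of_hasDerivWithinAt c₀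
      (fun u hu => (hasDerivWithinAt_det_im_of_riccati (hH u (hsub hu)) (hric u (hsub hu))).mono
        hsub)
      (fun u hu => hpos u (hsub hu)) (hη t ht)
  intro t ht t' ht'
  rw [heq t ht, heq t' ht']

/-- Constancy of `|a₀|²/√(det Im H)` along the geodesic, where
`a₀(t) = c₀ exp(−(1/2)∫_{t₀}^t tr(B(s) + C(s)H(s)) ds)` is the leading Gaussian beam
amplitude and `H` solves the matrix Riccati equation `H' + BH + HBᵀ + HCH = F` with
`H` complex symmetric and `Im H` positive definite. -/
theorem stmt11 (d : ℕ) (hd : 1 ≤ d) (I : Set ℝ) (hI : I.OrdConnected)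
    (t₀ : ℝ) (ht₀ : t₀ ∈ I)
    (B C F : ℝ → Matrix (Fin d) (Fin d) ℝ)
    (hB : ContinuousOn B I) (hC : ContinuousOn C I) (hF : ContinuousOn F I)
    (hCs : ∀ t ∈ I, (C t).IsSymm) (hFs : ∀ t ∈ I, (F t).IsSymm)
    (H H' : ℝ → Matrix (Fin d) (Fin d) ℂ)
    (hH : ∀ t ∈ I, ∀ i j : Fin d, HasDerivWithinAt (fun s => H s i j) (H' t i j) I t)
    (hH' : ContinuousOn H' I)
    (hHs : ∀ t ∈ I, (H t).IsSymm)
    (hHp : ∀ t ∈ I, ((H t).map Complex.im).PosDef)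
    (hric : ∀ t ∈ I,
      H' t + (B t).map Complex.ofReal * H t + H t * ((B t)ᵀ).map Complex.ofReal +
        H t * (C t).map Complex.ofReal * H t = (F t).map Complex.ofReal)
    (c₀ : ℂ) (a₀ : ℝ → ℂ)
    (ha₀ : ∀ t : ℝ, a₀ t = c₀ * Complex.exp (-(1 / 2 : ℂ) *
      ∫ s in t₀..t,
        Matrix.trace ((B s).map Complex.ofReal + (C s).map Complex.ofReal * H s))) :
    ∀ t ∈ I, ∀ t' ∈ I,
      ‖a₀ t‖ ^ 2 / Real.sqrt (((H t).map Complex.im).det) =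
        ‖a₀ t'‖ ^ 2 / Real.sqrt (((H t').map Complex.im).det) := by
  have hη := continuousOn_transportCoeff hB hC (continuousOn_of_hasDerivWithinAt_apply hH)
  exact stmt11_general hI ht₀ (fun t ht => (hη.mono (hI.uIcc_subset ht₀ ht)).intervalIntegrable)
    hH (fun t ht => (hHp t ht).det_pos) hric ha₀
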